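/- For every integer n ≥ 2, the solvable Baumslag–Solitar group BS(1,n) = ⟨a, t | t a t⁻¹ = aⁿ⟩ (the presented group on two generators with the single relator t a t⁻¹ a⁻ⁿ) is not almost convex: for every finite symmetric generating set S of BS(1,n) there exists k ∈ ℕ such that the Cayley graph Γ(BS(1,n), S) is not k-almost convex. -/

import Mathlib

/-- The Cayley graph of a group `G` with respect to a (symmetric) generating set `S`:
`x` is adjacent to `y` iff `x ≠ y` and `x⁻¹ * y ∈ S` (for symmetric `S`). -/
def cayleyGraph (G : Type*) [Group G] (S : Set G) : SimpleGraph G :=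
  SimpleGraph.fromRel (fun x y => x⁻¹ * y ∈ S)

/-- A graph `Γ` with basepoint `o` is *k-almost convex* if there is `N` such that any two
vertices on the sphere of radius `n` about `o` at distance at most `k` from each other can
be joined by a path of length at most `N` staying in the ball of radius `n`. -/
def KAlmostConvex {V : Type*} (Γ : SimpleGraph V) (o : V) (k : ℕ) : Prop :=
  ∃ N : ℕ, ∀ (n : ℕ) (x y : V), Γ.dist o x = n → Γ.dist o y = n → Γ.dist x y ≤ k →
    ∃ w : Γ.Walk x y, w.length ≤ N ∧ ∀ v ∈ w.support, Γ.dist o v ≤ n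

/-- The Baumslag–Solitar relator `t * a * t⁻¹ * a⁻ⁿ`, where `a = FreeGroup.of false` and
`t = FreeGroup.of true`. -/
def bsRel (n : ℕ) : FreeGroup Bool :=
  FreeGroup.of true * FreeGroup.of false * (FreeGroup.of true)⁻¹ * (FreeGroup.of false ^ n)⁻¹

/-- The solvable Baumslag–Solitar group `BS(1,n) = ⟨a, t | t a t⁻¹ = aⁿ⟩`. -/
def BS (n : ℕ) : Type := PresentedGroup ({bsRel n} : Set (FreeGroup Bool))

instance (n : ℕ) : Group (BS n) := by unfold BS; infer_instance

/-!
`BS(1,n)` acts on `ℚ` by affine maps `q ↦ n ^ k * q + b`, with `a` acting as `q ↦ q + 1` and `t` as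
`q ↦ n * q`; call `k` the height and `b` the translation part. Let `u ∈ S` have maximal height
`k > 0` and put `B = n ^ k`. The elements `P = u ^ (r + d) * a * u ^ (-d)` and `a * P` lie at the
same height, in a ball of radius `r + 2 * d + O(1)`, and their distance does not depend on `d`. As
`1` is not a sum of terms divisible by a high power of `n`, every path from `P` to `a * P` descends
to a bounded height. A vertex of bounded height in the ball of radius `2 * m` has translation part
`O(B ^ m)`, since a word for it can be evaluated from both ends, each half contributing `O(B ^ m)`.
If the path also has bounded length, then the translation part of `P`, which is about `B ^ (r + d)`,
is `O(B ^ m)` up to an additive constant. For `r` large but fixed, this fails as `d` grows.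
-/

section Graph

variable {V : Type*} {Γ : SimpleGraph V}

lemma dist_le_length_of_mem_support {x y v : V} (w : Γ.Walk x y) (hv : v ∈ w.support) :
    Γ.dist x v ≤ w.length := by
  classical
  exact (SimpleGraph.dist_le (w.takeUntil v hv)).trans (w.length_takeUntil_le_length hv)

lemma exists_dist_le_and_dist_le (hΓ : Γ.Connected) {x y : V} {i j : ℕ}
    (h : Γ.dist x y ≤ i + j) : ∃ z, Γ.dist x z ≤ i ∧ Γ.dist z y ≤ j := by
  obtain ⟨w, hw⟩ := hΓ.exists_walk_length_eq_dist x y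
  refine ⟨w.getVert i, (SimpleGraph.dist_le (w.take i)).trans ?_,
    (SimpleGraph.dist_le (w.drop i)).trans ?_⟩
  · simp
  · rw [SimpleGraph.Walk.drop_length]
    omega

/-- The two endpoints may lie on different spheres: a geodesic from `o` to the farther one is first
cut at the sphere of the nearer one, which at most doubles the distance. -/
lemma KAlmostConvex.exists_walk_in_ball {o : V} {k : ℕ} (hΓ : Γ.Connected)
    (hconv : KAlmostConvex Γ o (2 * k)) :
    ∃ N : ℕ, ∀ (m : ℕ) (x y : V), Γ.dist o x ≤ m → Γ.dist o y ≤ m → Γ.dist x y ≤ k →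
      ∃ w : Γ.Walk x y, w.length ≤ N ∧ ∀ v ∈ w.support, Γ.dist o v ≤ m := by
  obtain ⟨N, hN⟩ := hconv
  refine ⟨N + k, fun m x y hx hy hxy ↦ ?_⟩
  wlog hle : Γ.dist o x ≤ Γ.dist o y generalizing x y
  · obtain ⟨w, hlen, hball⟩ := this y x hy hx (SimpleGraph.dist_comm ▸ hxy) (by omega)
    exact ⟨w.reverse, by simpa using hlen, by simpa using hball⟩
  obtain ⟨z, hoz, hzy⟩ := exists_dist_le_and_dist_le hΓ
    (show Γ.dist o y ≤ Γ.dist o x + (Γ.dist o y - Γ.dist o x) by omega)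
  have hoy_le : Γ.dist o y ≤ Γ.dist o z + Γ.dist z y := hΓ.dist_triangle
  have hoy_le' : Γ.dist o y ≤ Γ.dist o x + Γ.dist x y := hΓ.dist_triangle
  have hxz : Γ.dist x z ≤ Γ.dist x y + Γ.dist y z := hΓ.dist_triangle
  rw [Γ.dist_comm (u := y)] at hxz
  obtain ⟨w₁, hlen₁, hball₁⟩ := hN _ x z rfl (by omega) (by omega)
  obtain ⟨w₂, hlen₂⟩ := hΓ.exists_walk_length_eq_dist z y
  refine ⟨w₁.append w₂, by rw [SimpleGraph.Walk.length_append]; omega, fun v hv ↦ ?_⟩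
  rcases (SimpleGraph.Walk.mem_support_append_iff _ _).mp hv with hv | hv
  · exact (hball₁ v hv).trans hx
  · have hov : Γ.dist o v ≤ Γ.dist o z + Γ.dist z v := hΓ.dist_triangle
    have hzv := dist_le_length_of_mem_support w₂ hv
    omega

end Graph

section CayleyGraph

variable {G : Type*} [Group G] {S : Set G}

lemma cayleyGraph_adj (hS_symm : ∀ s ∈ S, s⁻¹ ∈ S) {x y : G} :
    (cayleyGraph G S).Adj x y ↔ x ≠ y ∧ x⁻¹ * y ∈ S := by
  have hswap : y⁻¹ * x ∈ S → x⁻¹ * y ∈ S := fun h ↦ by simpa using hS_symm _ h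
  rw [cayleyGraph, SimpleGraph.fromRel_adj, or_iff_left_of_imp hswap]

lemma cayleyGraph_connected (hS_symm : ∀ s ∈ S, s⁻¹ ∈ S) (hS_gen : Subgroup.closure S = ⊤) :
    (cayleyGraph G S).Connected := by
  have reachable_mul (x : G) {s : G} (hs : s ∈ S) : (cayleyGraph G S).Reachable x (x * s) := by
    by_cases hx : x = x * s
    · rw [← hx]
    · exact ((cayleyGraph_adj hS_symm).mpr ⟨hx, by simpa using hs⟩).reachable
  have reachable_one (g : G) : (cayleyGraph G S).Reachable 1 g := by
    have hg : g ∈ Subgroup.closure S := hS_gen ▸ Subgroup.mem_top g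
    induction hg using Subgroup.closure_induction_right with
    | one => rfl
    | mul_right x _ s hs ih => exact ih.trans (reachable_mul x hs)
    | mul_inv_cancel x _ s hs ih => exact ih.trans (reachable_mul x (hS_symm s hs))
  exact ⟨fun x y ↦ (reachable_one x).symm.trans (reachable_one y)⟩

/-- Left multiplication by `g` as an endomorphism of the Cayley graph, which makes the graph metric
left-invariant. -/
def cayleyGraphMulLeft (S : Set G) (g : G) : cayleyGraph G S →g cayleyGraph G S where
  toFun x := g * x
  map_rel' {x y} h := by
    simpa only [cayleyGraph, SimpleGraph.fromRel_adj, ne_eq, mul_right_inj, mul_inv_rev, mul_assoc,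
      inv_mul_cancel_left] using h

/-- The word length of `g` with respect to `S`, encoded as the distance from `1` to `g` in the
Cayley graph; it is `0` if `g` does not lie in the subgroup generated by `S`. -/
noncomputable def wordLength (S : Set G) (g : G) : ℕ := (cayleyGraph G S).dist 1 g

lemma cayleyGraph_dist_eq_wordLength (hΓ : (cayleyGraph G S).Connected) (x y : G) :
    (cayleyGraph G S).dist x y = wordLength S (x⁻¹ * y) := by
  have dist_mul_le (g x y : G) :
      (cayleyGraph G S).dist (g * x) (g * y) ≤ (cayleyGraph G S).dist x y := by
    obtain ⟨w, hw⟩ := hΓ.exists_walk_length_eq_dist x y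
    rw [← hw, ← SimpleGraph.Walk.length_map (cayleyGraphMulLeft S g) w]
    exact SimpleGraph.dist_le _
  apply le_antisymm
  · simpa [wordLength] using dist_mul_le x 1 (x⁻¹ * y)
  · simpa [wordLength] using dist_mul_le x⁻¹ x y

lemma wordLength_mul_le (hΓ : (cayleyGraph G S).Connected) (g h : G) :
    wordLength S (g * h) ≤ wordLength S g + wordLength S h := by
  have := hΓ.dist_triangle (u := 1) (v := g) (w := g * h)
  rwa [cayleyGraph_dist_eq_wordLength hΓ g, inv_mul_cancel_left] at this

lemma wordLength_inv (hΓ : (cayleyGraph G S).Connected) (g : G) :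
    wordLength S g⁻¹ = wordLength S g := by
  rw [← mul_one g⁻¹, ← cayleyGraph_dist_eq_wordLength hΓ, SimpleGraph.dist_comm, wordLength]

lemma wordLength_le_one (hS_symm : ∀ s ∈ S, s⁻¹ ∈ S) {s : G} (hs : s ∈ S) :
    wordLength S s ≤ 1 := by
  by_cases hone : 1 = s
  · simp [← hone, wordLength]
  · exact (SimpleGraph.dist_eq_one_iff_adj.mpr
      ((cayleyGraph_adj hS_symm).mpr ⟨hone, by simpa using hs⟩)).le

lemma wordLength_pow_le (hΓ : (cayleyGraph G S).Connected) (g : G) (k : ℕ) :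
    wordLength S (g ^ k) ≤ k * wordLength S g := by
  induction k with
  | zero => simp [wordLength]
  | succ k ih =>
    rw [pow_succ, add_one_mul]
    exact (wordLength_mul_le hΓ _ _).trans (by gcongr)

lemma exists_mul_eq_of_wordLength_le_add (hΓ : (cayleyGraph G S).Connected) {g : G} {i j : ℕ}
    (hg : wordLength S g ≤ i + j) :
    ∃ y z, y * z = g ∧ wordLength S y ≤ i ∧ wordLength S z ≤ j := by
  obtain ⟨y, hy, hyg⟩ := exists_dist_le_and_dist_le hΓ hg
  exact ⟨y, y⁻¹ * g, mul_inv_cancel_left y g, hy, cayleyGraph_dist_eq_wordLength hΓ y g ▸ hyg⟩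

end CayleyGraph

namespace BS

/-- The generator `a` of `BS(1,n)`. -/
def a (n : ℕ) : BS n := PresentedGroup.of (rels := {bsRel n}) false

/-- The stable letter `t` of `BS(1,n)`. -/
def t (n : ℕ) : BS n := PresentedGroup.of (rels := {bsRel n}) true

section NormalForm

variable {n : ℕ}

lemma t_conj_a : t n * a n * (t n)⁻¹ = a n ^ n :=
  mul_inv_eq_one.mp (PresentedGroup.one_of_mem (rels := {bsRel n}) rfl)

lemma closure_t_a : Subgroup.closure {t n, a n} = ⊤ := by
  have hrange : Set.range (PresentedGroup.of (rels := {bsRel n})) = ({t n, a n} : Set (BS n)) :=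
    (Bool.range_eq _).trans (Set.pair_comm _ _)
  exact hrange ▸ PresentedGroup.closure_range_of {bsRel n}

lemma t_pow_conj_a_zpow (i : ℕ) (k : ℤ) :
    t n ^ i * a n ^ k * (t n ^ i)⁻¹ = a n ^ (n ^ i * k : ℤ) := by
  induction i generalizing k with
  | zero => simp
  | succ i ih =>
    calc t n ^ (i + 1) * a n ^ k * (t n ^ (i + 1))⁻¹
        = t n ^ i * (t n * a n ^ k * (t n)⁻¹) * (t n ^ i)⁻¹ := by rw [pow_succ]; group
      _ = t n ^ i * a n ^ (n * k : ℤ) * (t n ^ i)⁻¹ := by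
        rw [← conj_zpow, t_conj_a, zpow_mul, zpow_natCast]
      _ = a n ^ (n ^ (i + 1) * k : ℤ) := by rw [ih, pow_succ, mul_assoc]

lemma t_pow_conj_a (i : ℕ) : t n ^ i * a n * (t n ^ i)⁻¹ = a n ^ (n ^ i : ℤ) := by
  simpa only [zpow_one, mul_one] using t_pow_conj_a_zpow i 1

lemma exists_eq_t_pow_inv_mul_a_zpow_mul_t_pow (g : BS n) :
    ∃ (i j : ℕ) (k : ℤ), g = (t n ^ i)⁻¹ * a n ^ k * t n ^ j := by
  have a_zpow_mul (l : ℤ) (i j : ℕ) (k : ℤ) : a n ^ l * ((t n ^ i)⁻¹ * a n ^ k * t n ^ j) =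
      (t n ^ i)⁻¹ * a n ^ (n ^ i * l + k) * t n ^ j := by
    rw [zpow_add, ← t_pow_conj_a_zpow]
    group
  have hg : g ∈ Subgroup.closure {t n, a n} := closure_t_a ▸ Subgroup.mem_top g
  induction hg using Subgroup.closure_induction_left with
  | one => exact ⟨0, 0, 0, by simp⟩
  | mul_left x hx g _ ih =>
    obtain ⟨i, j, k, rfl⟩ := ih
    rcases hx with rfl | rfl
    · refine ⟨i, j + 1, n * k, ?_⟩
      calc t n * ((t n ^ i)⁻¹ * a n ^ k * t n ^ j)
          = (t n ^ i)⁻¹ * (t n ^ 1 * a n ^ k * (t n ^ 1)⁻¹) * t n ^ (j + 1) := by group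
        _ = (t n ^ i)⁻¹ * a n ^ (n * k : ℤ) * t n ^ (j + 1) := by rw [t_pow_conj_a_zpow, pow_one]
    · exact ⟨i, j, _, by simpa only [zpow_one] using a_zpow_mul 1 i j k⟩
  | inv_mul_cancel x hx g _ ih =>
    obtain ⟨i, j, k, rfl⟩ := ih
    rcases hx with rfl | rfl
    · exact ⟨i + 1, j, k, by rw [pow_succ]; group⟩
    · exact ⟨i, j, _, by simpa only [zpow_neg_one] using a_zpow_mul (-1) i j k⟩

lemma commute_a_conj_a (g : BS n) : Commute (a n) (g * a n * g⁻¹) := by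
  obtain ⟨i, j, k, rfl⟩ := exists_eq_t_pow_inv_mul_a_zpow_mul_t_pow g
  set g := (t n ^ i)⁻¹ * a n ^ k * t n ^ j with hg
  have hconj : t n ^ i * (g * a n * g⁻¹) * (t n ^ i)⁻¹ = a n ^ (n ^ j : ℤ) := by
    calc t n ^ i * (g * a n * g⁻¹) * (t n ^ i)⁻¹
        = a n ^ k * (t n ^ j * a n * (t n ^ j)⁻¹) * (a n ^ k)⁻¹ := by rw [hg]; group
      _ = a n ^ (n ^ j : ℤ) := by rw [t_pow_conj_a]; group
  rw [← Commute.conj_iff (t n ^ i), hconj, t_pow_conj_a]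
  exact (Commute.refl (a n)).zpow_zpow _ _

end NormalForm

section AffineAction

variable (n : ℕ) [NeZero n]

/-- The action of `ℤ` on the additive group of `ℚ` in which `k` acts as multiplication by `n ^ k`;
the resulting semidirect product is a group of affine maps of `ℚ`. -/
noncomputable def scaling : Multiplicative ℤ →* MulAut (Multiplicative ℚ) :=
  (MulAutMultiplicative ℚ).symm.toMonoidHom.comp
    (AddAut.mulLeft.comp (zpowersHom ℚˣ (Units.mk0 (n : ℚ) (NeZero.ne _))))

variable {n}

lemma scaling_apply (k : Multiplicative ℤ) (q : Multiplicative ℚ) :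
    scaling n k q = .ofAdd ((n : ℚ) ^ k.toAdd * q.toAdd) := by
  have hunit : scaling n k q =
      .ofAdd (((Units.mk0 (n : ℚ) (NeZero.ne _) ^ k.toAdd : ℚˣ) : ℚ) * q.toAdd) := rfl
  simpa only [Units.val_zpow_eq_zpow_val, Units.val_mk0] using hunit

variable (n)

/-- The affine action of `BS(1,n)` on `ℚ`, where `a` acts as `q ↦ q + 1` and `t` as `q ↦ n * q`;
the affine map `q ↦ n ^ k * q + b` is encoded as the element `(b, k)` of `ℚ ⋊ ℤ`. -/
noncomputable def affineAction : BS n →* Multiplicative ℚ ⋊[scaling n] Multiplicative ℤ :=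
  PresentedGroup.toGroup (rels := {bsRel n})
    (f := fun x ↦ if x then SemidirectProduct.inr (.ofAdd 1) else SemidirectProduct.inl (.ofAdd 1))
    (by
      rintro _ rfl
      have hrel : scaling n (.ofAdd 1) (.ofAdd 1) = .ofAdd 1 ^ n := by
        simp [scaling_apply, ← ofAdd_nsmul]
      simp only [bsRel, map_mul, map_inv, map_pow, FreeGroup.lift_apply_of, if_true,
        Bool.false_eq_true, if_false]
      rw [mul_inv_eq_one, ← map_inv, ← SemidirectProduct.inl_aut, hrel, map_pow])

variable {n}

lemma affineAction_a : affineAction n (a n) = SemidirectProduct.inl (.ofAdd 1) :=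
  PresentedGroup.toGroup.of _

lemma affineAction_t : affineAction n (t n) = SemidirectProduct.inr (.ofAdd 1) :=
  PresentedGroup.toGroup.of _

/-- The exponent `k` of the scaling factor of the affine map `q ↦ n ^ k * q + b` by which `g`
acts: the vertical coordinate in the Cayley graph. -/
noncomputable def height (g : BS n) : ℤ := (affineAction n g).right.toAdd

/-- The translation part `b` of the affine map `q ↦ n ^ k * q + b` by which `g` acts:
the horizontal coordinate in the Cayley graph. -/
noncomputable def translation (g : BS n) : ℚ := (affineAction n g).left.toAdd

lemma height_mul (g h : BS n) : height (g * h) = height g + height h := by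
  simp [height]

lemma height_inv (g : BS n) : height g⁻¹ = -height g := by
  simp [height]

lemma height_pow (g : BS n) (k : ℕ) : height (g ^ k) = k * height g := by
  induction k with
  | zero => simp [height]
  | succ k ih => rw [pow_succ, height_mul, ih]; push_cast; ring

lemma height_a : height (a n) = 0 := by
  simp [height, affineAction_a]

lemma height_t : height (t n) = 1 := by
  simp [height, affineAction_t]

lemma translation_one : translation (1 : BS n) = 0 := by
  simp [translation]

lemma translation_a : translation (a n) = 1 := by
  simp [translation, affineAction_a]

lemma translation_mul (g h : BS n) :
    translation (g * h) = translation g + (n : ℚ) ^ height g * translation h := by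
  simp [translation, height, scaling_apply]

lemma translation_conj_a (g : BS n) : translation (g * a n * g⁻¹) = (n : ℚ) ^ height g := by
  have hinv : translation g + (n : ℚ) ^ height g * translation g⁻¹ = 0 := by
    rw [← translation_mul, mul_inv_cancel, translation_one]
  rw [translation_mul, translation_mul, translation_a, height_mul, height_a, add_zero]
  linear_combination hinv

lemma translation_sub_translation (x y : BS n) :
    translation y - translation x = (n : ℚ) ^ height x * translation (x⁻¹ * y) := by
  rw [sub_eq_iff_eq_add', ← translation_mul, mul_inv_cancel_left]

end AffineAction

section WordLengthBounds

variable {n : ℕ} {S : Set (BS n)}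

lemma exists_mem_maximal_height_pos [NeZero n] (hS_fin : S.Finite) (hS_symm : ∀ s ∈ S, s⁻¹ ∈ S)
    (hS_gen : Subgroup.closure S = ⊤) :
    ∃ u ∈ S, 0 < height u ∧ ∀ s ∈ S, height s ≤ height u := by
  obtain ⟨s, hs, hs_ne⟩ : ∃ s ∈ S, height s ≠ 0 := by
    by_contra! hzero
    have height_eq_zero (g : BS n) : height g = 0 := by
      have hg : g ∈ Subgroup.closure S := hS_gen ▸ Subgroup.mem_top g
      induction hg using Subgroup.closure_induction with
      | mem s hs => exact hzero s hs
      | one => simp [height]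
      | mul x y _ _ hx hy => rw [height_mul, hx, hy, add_zero]
      | inv x _ hx => rw [height_inv, hx, neg_zero]
    exact one_ne_zero (height_t.symm.trans (height_eq_zero (t n)))
  obtain ⟨u, hu, hmax⟩ := Set.exists_max_image S height hS_fin ⟨s, hs⟩
  have hs_le := hmax s hs
  have hs_inv_le := hmax s⁻¹ (hS_symm s hs)
  rw [height_inv] at hs_inv_le
  exact ⟨u, hu, by omega, hmax⟩

/-- Along a walk that stays at height at least `c`, every step changes the translation part by
`n ^ height` times that of a generator, which is small in the `p`-adic norm for `p ∣ n`. -/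
lemma padicNorm_translation_sub_lt_one [NeZero n] (hS_symm : ∀ s ∈ S, s⁻¹ ∈ S) {p c : ℕ}
    [Fact p.Prime] (hS_lt : ∀ s ∈ S, padicNorm p n ^ c * padicNorm p (translation s) < 1)
    {x y : BS n} (w : (cayleyGraph (BS n) S).Walk x y) (hw : ∀ v ∈ w.support, c ≤ height v) :
    padicNorm p (translation y - translation x) < 1 := by
  induction w with
  | nil => simp
  | @cons x z y hxz w ih =>
    have hzy : padicNorm p (translation y - translation z) < 1 := ih fun v hv ↦ hw v (by simp [hv])
    have hxz' : padicNorm p (translation z - translation x) < 1 := by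
      have hcx : (c : ℤ) ≤ height x := hw x (by simp)
      obtain ⟨h, hh⟩ := Int.eq_ofNat_of_zero_le (show 0 ≤ height x by omega)
      have hch : c ≤ h := by omega
      calc padicNorm p (translation z - translation x)
          = padicNorm p n ^ h * padicNorm p (translation (x⁻¹ * z)) := by
            rw [translation_sub_translation, hh, zpow_natCast, padicNorm.mul,
              IsAbsoluteValue.abv_pow (padicNorm p)]
        _ ≤ padicNorm p n ^ c * padicNorm p (translation (x⁻¹ * z)) := by
            gcongr ?_ * _
            · exact padicNorm.nonneg _
            · exact pow_le_pow_of_le_one (padicNorm.nonneg _) (padicNorm.of_nat n) hch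
        _ < 1 := hS_lt _ ((cayleyGraph_adj hS_symm).mp hxz).2
    rw [← sub_add_sub_cancel _ (translation z)]
    exact padicNorm.nonarchimedean.trans_lt (max_lt hzy hxz')

/-- A word for `v` of length `2 * m` is cut in the middle: as `v` is low, the second half, read
backwards from `v`, barely changes the translation part, so the first half has to produce it. -/
lemma abs_translation_le_of_height_le [NeZero n] (hΓ : (cayleyGraph (BS n) S).Connected) {B σ : ℚ}
    (hσ : ∀ (g : BS n) (l : ℕ), wordLength S g ≤ l → |translation g| ≤ σ * B ^ l)
    {v : BS n} {c : ℤ} {m : ℕ} (hheight : height v ≤ c) (hlength : wordLength S v ≤ 2 * m) :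
    |translation v| ≤ (1 + (n : ℚ) ^ c) * σ * B ^ m := by
  obtain ⟨y, z, rfl, hy, hz⟩ := exists_mul_eq_of_wordLength_le_add hΓ (hlength.trans_eq (two_mul m))
  have hz_inv : |translation z⁻¹| ≤ σ * B ^ m :=
    hσ _ _ ((wordLength_inv hΓ z).trans_le hz)
  have hsplit : translation (y * z) =
      translation y - (n : ℚ) ^ height (y * z) * translation z⁻¹ := by
    rw [eq_sub_iff_add_eq, ← translation_mul, mul_inv_cancel_right]
  calc |translation (y * z)|
      ≤ |translation y| + (n : ℚ) ^ height (y * z) * |translation z⁻¹| := by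
        grw [hsplit, abs_sub, abs_mul, abs_of_nonneg (by positivity : 0 ≤ (n : ℚ) ^ height (y * z))]
    _ ≤ σ * B ^ m + (n : ℚ) ^ c * (σ * B ^ m) := by
        gcongr
        · exact hσ _ _ hy
        · exact Nat.one_le_cast.mpr NeZero.one_le
    _ = (1 + (n : ℚ) ^ c) * σ * B ^ m := by ring

variable [n.AtLeastTwo]

lemma exists_height_lt_of_translation_sub_eq_one (hS_fin : S.Finite) (hS_symm : ∀ s ∈ S, s⁻¹ ∈ S) :
    ∃ c : ℕ, ∀ {x y : BS n} (w : (cayleyGraph (BS n) S).Walk x y),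
      translation y - translation x = 1 → ∃ v ∈ w.support, height v < c := by
  obtain ⟨p, hp, hpn⟩ := Nat.exists_prime_and_dvd (Nat.AtLeastTwo.ne_one (n := n))
  have : Fact p.Prime := ⟨hp⟩
  have hn_lt : padicNorm p n < 1 := (padicNorm.nat_lt_one_iff n).mpr hpn
  have hS_small : ∀ᶠ c : ℕ in Filter.atTop,
      ∀ s ∈ S, padicNorm p n ^ c * padicNorm p (translation s) < 1 := by
    refine (Filter.eventually_all_finite hS_fin).mpr fun s _ ↦ ?_
    have htendsto := (tendsto_pow_atTop_nhds_zero_of_lt_one (padicNorm.nonneg _) hn_lt).mul_const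
      (padicNorm p (translation s))
    exact htendsto.eventually_lt_const (by simp)
  obtain ⟨c, hc⟩ := hS_small.exists
  refine ⟨c, fun w hxy ↦ ?_⟩
  by_contra! hw
  have hlt := padicNorm_translation_sub_lt_one hS_symm hc w hw
  rw [hxy, padicNorm.one] at hlt
  exact hlt.false

lemma one_lt_natCast_zpow {k : ℤ} (hk : 0 < k) : 1 < (n : ℚ) ^ k :=
  one_lt_zpow₀ (Nat.one_lt_cast.mpr Nat.AtLeastTwo.one_lt) hk

lemma two_le_natCast_zpow {k : ℤ} (hk : 0 < k) : 2 ≤ (n : ℚ) ^ k := by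
  lift k to ℕ using hk.le
  have hn : 2 ≤ n ^ k := Nat.AtLeastTwo.prop.trans (Nat.le_self_pow (by omega) n)
  exact_mod_cast hn

lemma abs_translation_le_of_walk (hS_symm : ∀ s ∈ S, s⁻¹ ∈ S) {M : ℤ} (hM : 0 < M)
    (hS_height : ∀ s ∈ S, height s ≤ M) {σ : ℚ} (hσ : 0 ≤ σ)
    (hS_translation : ∀ s ∈ S, |translation s| ≤ σ) {x y : BS n}
    (w : (cayleyGraph (BS n) S).Walk x y) :
    |translation (x⁻¹ * y)| ≤ σ * (((n : ℚ) ^ M) ^ w.length - 1) := by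
  induction w with
  | nil => simp [translation_one]
  | @cons x z y hxz w ih =>
    have hs := ((cayleyGraph_adj hS_symm).mp hxz).2
    have hheight : (n : ℚ) ^ height (x⁻¹ * z) ≤ (n : ℚ) ^ M :=
      zpow_le_zpow_right₀ (Nat.one_le_cast.mpr NeZero.one_le) (hS_height _ hs)
    calc |translation (x⁻¹ * y)|
        = |translation (x⁻¹ * z) + (n : ℚ) ^ height (x⁻¹ * z) * translation (z⁻¹ * y)| := by
          rw [← translation_mul, mul_assoc, mul_inv_cancel_left]
      _ ≤ |translation (x⁻¹ * z)| + (n : ℚ) ^ height (x⁻¹ * z) * |translation (z⁻¹ * y)| := by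
          grw [abs_add_le, abs_mul, abs_of_nonneg (by positivity : 0 ≤ (n : ℚ) ^ height (x⁻¹ * z))]
      _ ≤ σ + (n : ℚ) ^ M * (σ * (((n : ℚ) ^ M) ^ w.length - 1)) := by
          gcongr
          exact hS_translation _ hs
      _ ≤ σ * (((n : ℚ) ^ M) ^ (w.length + 1) - 1) := by
          rw [pow_succ]
          nlinarith [two_le_natCast_zpow (n := n) hM]

lemma exists_abs_translation_le_pow (hS_fin : S.Finite) (hS_symm : ∀ s ∈ S, s⁻¹ ∈ S)
    (hΓ : (cayleyGraph (BS n) S).Connected) {M : ℤ} (hM : 0 < M)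
    (hS_height : ∀ s ∈ S, height s ≤ M) :
    ∃ σ : ℚ, ∀ (g : BS n) (l : ℕ), wordLength S g ≤ l →
      |translation g| ≤ σ * ((n : ℚ) ^ M) ^ l := by
  obtain ⟨σ, hσ⟩ := (hS_fin.image fun s ↦ |translation s|).bddAbove
  refine ⟨max σ 0, fun g l hg ↦ ?_⟩
  obtain ⟨w, hw⟩ := hΓ.exists_walk_length_eq_dist 1 g
  calc |translation g| = |translation (1⁻¹ * g)| := by rw [inv_one, one_mul]
    _ ≤ max σ 0 * (((n : ℚ) ^ M) ^ w.length - 1) :=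
      abs_translation_le_of_walk hS_symm hM hS_height (le_max_right σ 0)
        (fun s hs ↦ (hσ ⟨s, hs, rfl⟩).trans (le_max_left σ 0)) w
    _ ≤ max σ 0 * ((n : ℚ) ^ M) ^ l := by
      grw [sub_le_self _ zero_le_one]
      gcongr
      · exact (one_lt_natCast_zpow hM).le
      · exact hw.trans_le hg

lemma exists_abs_translation_le_of_walk_in_ball (hS_fin : S.Finite) (hS_symm : ∀ s ∈ S, s⁻¹ ∈ S)
    (hΓ : (cayleyGraph (BS n) S).Connected) {M : ℤ} (hM : 0 < M)
    (hS_height : ∀ s ∈ S, height s ≤ M) :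
    ∃ K : ℚ, ∀ {x y : BS n} {m N : ℕ} (w : (cayleyGraph (BS n) S).Walk x y),
      translation y - translation x = 1 → w.length ≤ N →
      (∀ v ∈ w.support, wordLength S v ≤ 2 * m) →
      |translation x| ≤ K * (((n : ℚ) ^ M) ^ m + (n : ℚ) ^ height x * ((n : ℚ) ^ M) ^ N) := by
  obtain ⟨c, hc⟩ := exists_height_lt_of_translation_sub_eq_one hS_fin hS_symm
  obtain ⟨σ, hσ⟩ := exists_abs_translation_le_pow hS_fin hS_symm hΓ hM hS_height
  have hσ_nonneg : 0 ≤ σ := by simpa using (abs_nonneg _).trans (hσ 1 0 (by simp [wordLength]))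
  refine ⟨(1 + (n : ℚ) ^ (c : ℤ)) * σ, fun {x y m N} w hxy hN hball ↦ ?_⟩
  obtain ⟨v, hv, hv_low⟩ := hc w hxy
  have hxv : wordLength S (x⁻¹ * v) ≤ N := by
    rw [← cayleyGraph_dist_eq_wordLength hΓ]
    exact (dist_le_length_of_mem_support w hv).trans hN
  have hn_pos : 0 ≤ (n : ℚ) ^ height x := by positivity
  calc |translation x| ≤ |translation v| + |translation v - translation x| := by
        simpa using abs_sub (translation v) (translation v - translation x)
    _ = |translation v| + (n : ℚ) ^ height x * |translation (x⁻¹ * v)| := by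
        rw [translation_sub_translation, abs_mul, abs_of_nonneg hn_pos]
    _ ≤ (1 + (n : ℚ) ^ (c : ℤ)) * σ * ((n : ℚ) ^ M) ^ m +
          (n : ℚ) ^ height x * ((1 + (n : ℚ) ^ (c : ℤ)) * σ * ((n : ℚ) ^ M) ^ N) := by
        gcongr
        · exact abs_translation_le_of_height_le hΓ hσ hv_low.le (hball v hv)
        · refine (hσ _ _ hxv).trans ?_
          gcongr
          exact le_mul_of_one_le_left hσ_nonneg (le_add_of_nonneg_right (by positivity))
    _ = _ := by ring

end WordLengthBounds

section Summit

variable {n : ℕ} {S : Set (BS n)}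

/-- The elements `u ^ (r + d) * a * u ^ (-d)` that witness the failure of almost convexity: for `u`
of positive height they stay at the fixed height `r * height u`, while the translation part grows
exponentially in `d`. -/
def summit (u : BS n) (r d : ℕ) : BS n := u ^ (r + d) * a n * (u ^ d)⁻¹

lemma summit_inv_mul_a_mul_summit (u : BS n) (r d : ℕ) :
    (summit u r d)⁻¹ * (a n * summit u r d) = (u ^ r)⁻¹ * a n * u ^ r := by
  have hcomm : (a n)⁻¹ * ((u ^ (r + d))⁻¹ * a n * u ^ (r + d)) * a n =
      (u ^ (r + d))⁻¹ * a n * u ^ (r + d) := by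
    simpa only [inv_inv] using (commute_a_conj_a (u ^ (r + d))⁻¹).inv_mul_cancel
  calc (summit u r d)⁻¹ * (a n * summit u r d)
      = u ^ d * ((a n)⁻¹ * ((u ^ (r + d))⁻¹ * a n * u ^ (r + d)) * a n) * (u ^ d)⁻¹ := by
        rw [summit]; group
    _ = (u ^ r)⁻¹ * a n * u ^ r := by rw [hcomm, pow_add]; group

lemma wordLength_summit_le (hΓ : (cayleyGraph (BS n) S).Connected) {u : BS n}
    (hu : wordLength S u ≤ 1) (r d : ℕ) :
    wordLength S (summit u r d) ≤ r + 2 * d + wordLength S (a n) := by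
  have hpow (k : ℕ) : wordLength S (u ^ k) ≤ k :=
    (wordLength_pow_le hΓ u k).trans (mul_le_of_le_one_right k.zero_le hu)
  calc wordLength S (summit u r d)
      ≤ wordLength S (u ^ (r + d)) + wordLength S (a n) + wordLength S (u ^ d) := by
        grw [summit, wordLength_mul_le hΓ, wordLength_mul_le hΓ, wordLength_inv hΓ]
    _ ≤ r + d + wordLength S (a n) + d := by grw [hpow, hpow]
    _ = r + 2 * d + wordLength S (a n) := by ring

lemma exists_walk_summit (hΓ : (cayleyGraph (BS n) S).Connected) {u : BS n}
    (hu : wordLength S u ≤ 1) {r : ℕ}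
    (hconv : KAlmostConvex (cayleyGraph (BS n) S) 1
      (2 * wordLength S ((u ^ r)⁻¹ * a n * u ^ r))) :
    ∃ N : ℕ, ∀ d : ℕ, ∃ w : (cayleyGraph (BS n) S).Walk (summit u r d) (a n * summit u r d),
      w.length ≤ N ∧ ∀ v ∈ w.support, wordLength S v ≤ r + 2 * d + 2 * wordLength S (a n) := by
  obtain ⟨N, hN⟩ := hconv.exists_walk_in_ball hΓ
  refine ⟨N, fun d ↦ hN _ _ _ ?_ ?_ ?_⟩
  · grw [← wordLength, wordLength_summit_le hΓ hu]
    omega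
  · grw [← wordLength, wordLength_mul_le hΓ, wordLength_summit_le hΓ hu]
    omega
  · rw [cayleyGraph_dist_eq_wordLength hΓ, summit_inv_mul_a_mul_summit]

variable [NeZero n]

lemma zpow_height_summit (u : BS n) (r d : ℕ) :
    (n : ℚ) ^ height (summit u r d) = ((n : ℚ) ^ height u) ^ r := by
  have hheight : height (summit u r d) = height u * r := by
    rw [summit, height_mul, height_mul, height_inv, height_a, height_pow, height_pow]
    push_cast
    ring
  rw [hheight, zpow_mul, zpow_natCast]

lemma translation_summit (u : BS n) (r d : ℕ) :
    translation (summit u r d) = ((n : ℚ) ^ height u) ^ (r + d) + translation (u ^ r) := by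
  have hfactor : summit u r d = u ^ (r + d) * a n * (u ^ (r + d))⁻¹ * u ^ r := by
    rw [summit, pow_add]; group
  have hheight : height (u ^ (r + d) * a n * (u ^ (r + d))⁻¹) = 0 := by
    rw [height_mul, height_mul, height_inv, height_a]
    ring
  rw [hfactor, translation_mul, hheight, translation_conj_a, height_pow, zpow_zero, one_mul,
    mul_comm, zpow_mul, zpow_natCast]

lemma translation_a_mul_sub_translation (g : BS n) : translation (a n * g) - translation g = 1 := by
  rw [translation_mul, height_a, translation_a, zpow_zero, one_mul, add_sub_cancel_right]

end Summit

end BS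

/-- For `n ≥ 2`, the solvable Baumslag–Solitar group `BS(1,n)` is not almost convex: for
every finite symmetric generating set `S` there is a `k` such that the Cayley graph is not
`k`-almost convex. -/
theorem bs_not_almostConvex (n : ℕ) (hn : 2 ≤ n)
    (S : Set (BS n)) (hS_fin : S.Finite) (hS_symm : ∀ s ∈ S, s⁻¹ ∈ S)
    (hS_one : (1 : BS n) ∉ S) (hS_gen : Subgroup.closure S = ⊤) :
    ∃ k : ℕ, ¬ KAlmostConvex (cayleyGraph (BS n) S) 1 k := by
  have : n.AtLeastTwo := ⟨hn⟩
  have hΓ := cayleyGraph_connected hS_symm hS_gen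
  obtain ⟨u, huS, hu_pos, hu_max⟩ := BS.exists_mem_maximal_height_pos hS_fin hS_symm hS_gen
  obtain ⟨K, hK⟩ := BS.exists_abs_translation_le_of_walk_in_ball hS_fin hS_symm hΓ hu_pos hu_max
  have hB : 1 < (n : ℚ) ^ BS.height u := BS.one_lt_natCast_zpow hu_pos
  set B : ℚ := (n : ℚ) ^ BS.height u with hB_def
  obtain ⟨e, he⟩ := pow_unbounded_of_one_lt (K + 1) hB
  -- The summit has translation part about `B ^ (r + d)` and lies in a ball of radius `2 * m`, and
  -- `r` is chosen such that `r + d = e + m`.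
  set r := 2 * (wordLength S (BS.a n) + e) with hr
  refine ⟨2 * wordLength S ((u ^ r)⁻¹ * BS.a n * u ^ r), fun hconv ↦ ?_⟩
  obtain ⟨N, hN⟩ := BS.exists_walk_summit hΓ (wordLength_le_one hS_symm huS) hconv
  obtain ⟨d, hd⟩ := pow_unbounded_of_one_lt (K * (B ^ r * B ^ N) - BS.translation (u ^ r)) hB
  obtain ⟨w, hw_length, hw_ball⟩ := hN d
  obtain ⟨m, hm⟩ : ∃ m, r + d = e + m := ⟨2 * wordLength S (BS.a n) + e + d, by rw [hr]; ring⟩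
  have hupper := (le_abs_self _).trans <|
    hK w (BS.translation_a_mul_sub_translation _) hw_length fun v hv ↦
      (hw_ball v hv).trans (show _ ≤ 2 * m by omega)
  rw [BS.translation_summit, BS.zpow_height_summit, ← hB_def, hm, pow_add] at hupper
  have hdm : B ^ d ≤ B ^ m := pow_le_pow_right₀ hB.le (by omega)
  have hgap : (K + 1) * B ^ m ≤ B ^ e * B ^ m := by gcongr
  linarith
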